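/- Let V be a representation of the Yangian Y(gl_n). For any indices a, b, c_1,…,c_l, d_1,…,d_l ∈ {1,…,n} the following identity of End(V)-valued formal series in u^{−1} and v^{−1} holds: (u−v)[t_{ab}(u), t^{c_1⋯c_l}_{d_1⋯d_l}(v)] = Σ_{i=1}^l t_{c_i b}(u) · t^{c_1⋯ a ⋯ c_l}_{d_1⋯d_l}(v) − Σ_{i=1}^l t^{c_1⋯c_l}_{d_1⋯ b ⋯ d_l}(v) · t_{a d_i}(u), where in the i-th summand of the first sum the upper index c_i of the quantum minor is replaced by a, and in the i-th summand of the second sum the lower index d_i is replaced by b. -/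

import Mathlib

/-- A representation of the Yangian `Y(gl_n)` on a complex vector space `V`:
a family of operators `T r i j` (`r ≥ 1`), with `T 0 i j = δ_{ij}·id`,
satisfying the defining relations
`[T^{(r+1)}_{ij}, T^{(s)}_{kl}] − [T^{(r)}_{ij}, T^{(s+1)}_{kl}]
  = T^{(r)}_{kj} T^{(s)}_{il} − T^{(s)}_{kj} T^{(r)}_{il}`. -/
def IsYangianRep (n : ℕ) {V : Type*} [AddCommGroup V] [Module ℂ V]
    (T : ℕ → Fin n → Fin n → (V →ₗ[ℂ] V)) : Prop :=
  (∀ i j : Fin n, T 0 i j = if i = j then LinearMap.id else 0) ∧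
  (∀ r s : ℕ, ∀ i j k l : Fin n,
    (T (r + 1) i j ∘ₗ T s k l - T s k l ∘ₗ T (r + 1) i j)
      - (T r i j ∘ₗ T (s + 1) k l - T (s + 1) k l ∘ₗ T r i j)
    = T r k j ∘ₗ T s i l - T s k j ∘ₗ T r i l)

/-- Coefficients of the series `f(u − c)`, where `f(u) = Σ_r f_r u^{−r}` has
coefficients `f : ℕ → End(V)`: substitution is performed coefficientwise via
`(u−c)^{−r} = Σ_m (binom (m−1) (m−r)) c^{m−r} u^{−m}`. -/
noncomputable def shiftSer {V : Type*} [AddCommGroup V] [Module ℂ V]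
    (c : ℂ) (f : ℕ → (V →ₗ[ℂ] V)) : ℕ → (V →ₗ[ℂ] V) :=
  fun m => ∑ r ∈ Finset.range (m + 1),
    (((m - 1).choose (m - r) : ℂ) * c ^ (m - r)) • f r

/-- Cauchy product of two `End(V)`-valued series in `u⁻¹`. -/
noncomputable def mulSer {V : Type*} [AddCommGroup V] [Module ℂ V]
    (f g : ℕ → (V →ₗ[ℂ] V)) : ℕ → (V →ₗ[ℂ] V) :=
  fun m => ∑ r ∈ Finset.range (m + 1), f r ∘ₗ g (m - r)

/-- Product of a list of `End(V)`-valued series in `u⁻¹` (in the given order). -/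
noncomputable def prodSer {V : Type*} [AddCommGroup V] [Module ℂ V] :
    List (ℕ → (V →ₗ[ℂ] V)) → ℕ → (V →ₗ[ℂ] V)
  | [] => fun m => if m = 0 then LinearMap.id else 0
  | f :: rest => mulSer f (prodSer rest)

/-- The quantum minor `t^{a_1⋯a_l}_{b_1⋯b_l}(u)
= Σ_{σ ∈ S_l} sgn σ · t_{a_{σ(1)} b_1}(u) t_{a_{σ(2)} b_2}(u−1) ⋯
t_{a_{σ(l)} b_l}(u−l+1)`, as an `End(V)`-valued series in `u⁻¹` given by its
coefficients. -/
noncomputable def qminorSer {n : ℕ} {V : Type*} [AddCommGroup V] [Module ℂ V]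
    (T : ℕ → Fin n → Fin n → (V →ₗ[ℂ] V)) (l : ℕ) (a b : Fin l → Fin n) :
    ℕ → (V →ₗ[ℂ] V) :=
  fun m => ∑ σ : Equiv.Perm (Fin l),
    (((Equiv.Perm.sign σ : ℤ) : ℂ)) •
      prodSer (List.ofFn fun s : Fin l =>
        shiftSer ((s : ℕ) : ℂ) fun r => T r (a (σ s)) (b s)) m

/-!
For `l = 1` the identity says that `u - v - P` yields the same result whether it acts on the upper
indices of `t(u) t(v)` or on the lower indices of `t(v) t(u)`, where `P` exchanges the two indices.
Carrying `t(u)` across the word `t(v) t(v - 1) ⋯ t(v - l + 1)` therefore produces a factor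
`u - v + s - P_s` for each letter, on either side. By induction on `l`, the factors of the last
`l - 1` letters combine to `K + 1 - ∑_{i > 0} P_i` after antisymmetrisation, where `K = u - v`.
Antisymmetrisation also turns `P_i P_0` into `-P_i`, so that
`(K + 1 - ∑_{i > 0} P_i) (K - P_0)` becomes `(K + 1) (K - ∑_i P_i)`, and the factor `K + 1` can be
cancelled. The lower indices are treated in the same way, because the quantum minor is also
antisymmetric in them: by the defining relation at `u - v = 1`, antisymmetrising `t(v) t(v - 1)` in
its upper indices makes it antisymmetric in the lower ones.
-/

open Equiv Finset Function PowerSeries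

section Alternating

variable {I M Z : Type*} [AddCommGroup M] {l : ℕ}

/-- The alternating sum `∑ σ, sgn σ · f (c ∘ σ)` of a function `f` of `l` indices over all
rearrangements of the indices `c`; it turns ordered products of matrix entries into
determinants. -/
def alternatingSum (f : (Fin l → I) → M) (c : Fin l → I) : M :=
  ∑ σ : Perm (Fin l), Perm.sign σ • f (c ∘ σ)

theorem alternatingSum_add (f g : (Fin l → I) → M) (c : Fin l → I) :
    alternatingSum (fun c => f c + g c) c = alternatingSum f c + alternatingSum g c := by
  simp [alternatingSum, sum_add_distrib]

theorem alternatingSum_sub (f g : (Fin l → I) → M) (c : Fin l → I) :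
    alternatingSum (fun c => f c - g c) c = alternatingSum f c - alternatingSum g c := by
  simp [alternatingSum, smul_sub]

theorem alternatingSum_sum {ι : Type*} (s : Finset ι) (f : ι → (Fin l → I) → M) (c : Fin l → I) :
    alternatingSum (fun c => ∑ i ∈ s, f i c) c = ∑ i ∈ s, alternatingSum (f i) c := by
  simp only [alternatingSum, smul_sum]
  exact sum_comm

theorem alternatingSum_smul [Monoid Z] [DistribMulAction Z M] (z : Z) (f : (Fin l → I) → M)
    (c : Fin l → I) : alternatingSum (fun c => z • f c) c = z • alternatingSum f c := by
  simp only [alternatingSum, smul_sum, smul_comm z]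

theorem alternatingSum_comp_perm (f : (Fin l → I) → M) (τ : Perm (Fin l)) (c : Fin l → I) :
    alternatingSum (fun c => f (c ∘ τ)) c = Perm.sign τ • alternatingSum f c := by
  rw [alternatingSum, alternatingSum, smul_sum]
  refine Fintype.sum_equiv (Equiv.mulRight τ) _ _ fun σ => ?_
  rw [coe_mulRight, Perm.sign_mul, mul_comm, smul_smul, ← mul_assoc, Int.units_mul_self, one_mul,
    Perm.coe_mul, comp_assoc]

theorem alternatingSum_eq_zero_of_swap {f : (Fin l → I) → M} {i j : Fin l} (hij : i ≠ j)
    (hf : ∀ c, f (c ∘ swap i j) = f c) (c : Fin l → I) : alternatingSum f c = 0 := by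
  refine sum_involution (fun σ _ => σ * swap i j) (fun σ _ => ?_) (fun σ _ _ => ?_)
    (fun _ _ => mem_univ _) (fun σ _ => by simp)
  · rw [Perm.coe_mul, ← comp_assoc, hf, Perm.sign_mul, Perm.sign_swap hij, mul_neg_one,
      Units.neg_smul, add_neg_cancel]
  · simpa [swap_eq_one_iff] using hij

end Alternating

section Exchange

variable {I M Z : Type*} [AddCommGroup M] [CommRing Z] [Module Z M] {l : ℕ}

/-- The operator `K - e ∑_{i ∈ s} P_i` on functions of an auxiliary index `a` and of `l` indices
`c`, where `P_i` exchanges `a` with `c i`. For `s = {i}` it is a Yang R-matrix `u - P`, with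
denominators cleared. -/
def exchangeOp (s : Finset (Fin l)) (K e : Z) (f : I → (Fin l → I) → M) (a : I)
    (c : Fin l → I) : M :=
  K • f a c - e • ∑ i ∈ s, f (c i) (update c i a)

theorem exchangeOp_nsmul (s : Finset (Fin l)) (K e : Z) (m : ℕ) (f : I → (Fin l → I) → M)
    (a : I) (c : Fin l → I) :
    exchangeOp s K e (fun a c => m • f a c) a c = m • exchangeOp s K e f a c := by
  simp only [exchangeOp, ← smul_sum, smul_sub, smul_comm m]

theorem exchangeOp_comm {l' : ℕ} (s : Finset (Fin l)) (s' : Finset (Fin l')) (K K' e e' : Z)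
    (f : I → (Fin l → I) → I → (Fin l' → I) → M) (a b : I) (c : Fin l → I) (d : Fin l' → I) :
    exchangeOp s K e (fun a c => exchangeOp s' K' e' (f a c) b d) a c =
      exchangeOp s' K' e' (fun b d => exchangeOp s K e (fun a c => f a c b d) a c) b d := by
  simp only [exchangeOp, smul_sub, sum_sub_distrib, ← smul_sum]
  rw [sum_comm (s := s)]
  module

theorem alternatingSum_exchangeOp {l' : ℕ} (s : Finset (Fin l)) (K e : Z)
    (f : (Fin l' → I) → I → (Fin l → I) → M) (c : Fin l' → I) (b : I) (d : Fin l → I) :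
    alternatingSum (fun c => exchangeOp s K e (f c) b d) c =
      exchangeOp s K e (fun b d => alternatingSum (fun c => f c b d) c) b d := by
  simp only [exchangeOp, alternatingSum_sub, alternatingSum_smul, alternatingSum_sum]

theorem sum_exchange_alternatingSum (f : I → (Fin l → I) → M) (a : I) (c : Fin l → I) :
    ∑ i, alternatingSum (f (c i)) (update c i a) =
      alternatingSum (fun c => ∑ i, f (c i) (update c i a)) c := by
  simp only [alternatingSum, smul_sum]
  rw [sum_comm]
  refine sum_congr rfl fun σ _ => ?_
  refine Fintype.sum_equiv σ.symm _ _ fun i => ?_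
  rw [update_comp_equiv, comp_apply, apply_symm_apply]

theorem update_comp_swap {i j : Fin l} (hij : i ≠ j) (c : Fin l → I) (a : I) :
    update c j a ∘ swap j i = update (update c i a) j (c i) := by
  rw [comp_swap_eq_update, update_self, update_of_ne hij, update_comm hij.symm, update_idem]

theorem exchangeOp_compl_exchangeOp (j : Fin l) (K e : Z) (f : I → (Fin l → I) → M) (a : I)
    (c : Fin l → I) :
    exchangeOp {j}ᶜ (K + e) e (exchangeOp {j} K e f) a c =
      (K + e) • (K • f a c - e • f (c j) (update c j a)) -
        e • ∑ i ∈ {j}ᶜ, (K • f (c i) (update c i a) - e • f (c j) (update c j a ∘ swap j i)) := by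
  simp only [exchangeOp, sum_singleton]
  congr 2
  refine sum_congr rfl fun i hi => ?_
  have hij : i ≠ j := by simpa using hi
  rw [update_comp_swap hij, update_of_ne hij.symm]

theorem alternatingSum_exchangeOp_compl_exchangeOp (j : Fin l) (K e : Z)
    (f : I → (Fin l → I) → M) (a : I) (c : Fin l → I) :
    alternatingSum (exchangeOp {j}ᶜ (K + e) e (exchangeOp {j} K e f) a) c =
      (K + e) • exchangeOp univ K e (fun a => alternatingSum (f a)) a c := by
  have hswap : ∀ i ∈ ({j}ᶜ : Finset (Fin l)),
      alternatingSum (fun c => f (c j) (update c j a ∘ swap j i)) c =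
        -alternatingSum (fun c => f (c i) (update c i a)) c := by
    intro i hi
    have hij : i ≠ j := by simpa using hi
    have h := alternatingSum_comp_perm (fun c => f (c i) (update c i a)) (swap j i) c
    simpa [update_comp_equiv, Perm.sign_swap hij.symm] using h
  have hunfold := funext (exchangeOp_compl_exchangeOp j K e f a)
  rw [hunfold]
  simp only [alternatingSum_sub, alternatingSum_smul, alternatingSum_sum, sum_sub_distrib,
    ← smul_sum, sum_congr rfl hswap, sum_neg_distrib]
  rw [exchangeOp, sum_exchange_alternatingSum, alternatingSum_sum, Fintype.sum_eq_add_sum_compl j]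
  module

theorem exchangeOp_exchangeOp_compl {j : Fin l} (K e : Z) {h : I → (Fin l → I) → M}
    (hh : ∀ i ≠ j, ∀ b d, h b (d ∘ swap j i) = -h b d) (b : I) (d : Fin l → I) :
    exchangeOp {j} K e (exchangeOp {j}ᶜ (K + e) e h) b d =
      (K + e) • exchangeOp univ K e h b d := by
  have hswap : ∀ i ∈ ({j}ᶜ : Finset (Fin l)),
      h (update d j b i) (update (update d j b) i (d j)) = -h (d i) (update d i b) := by
    intro i hi
    have hij : i ≠ j := by simpa using hi
    rw [← hh i hij, swap_comm, update_comp_swap hij.symm, update_of_ne hij]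
  simp only [exchangeOp, sum_singleton, sum_congr rfl hswap, sum_neg_distrib]
  rw [Fintype.sum_eq_add_sum_compl j]
  module

theorem alternatingSum_exchangeOp_exchangeOp_compl {l' : ℕ} {j : Fin l} (K e : Z)
    {f : (Fin l' → I) → I → (Fin l → I) → M} {c : Fin l' → I}
    (hf : ∀ i ≠ j, ∀ b d, alternatingSum (fun c => f c b (d ∘ swap j i)) c =
      -alternatingSum (fun c => f c b d) c) (b : I) (d : Fin l → I) :
    alternatingSum (fun c => exchangeOp {j} K e (exchangeOp {j}ᶜ (K + e) e (f c)) b d) c =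
      (K + e) • exchangeOp univ K e (fun b d => alternatingSum (fun c => f c b d) c) b d := by
  rw [alternatingSum_exchangeOp, ← exchangeOp_exchangeOp_compl K e hf]
  congr 1
  funext b d
  exact alternatingSum_exchangeOp _ _ _ f c b d

end Exchange

section QuantumMinor

variable {I B : Type*} [Ring B]

/-- The ordered product `t_s(c₀, d₀) t_{s+1}(c₁, d₁) ⋯ t_{s+l-1}(c_{l-1}, d_{l-1})`, where `t_s`
stands for the matrix of series `t(v - s)`. -/
def entryProd (t : ℕ → I → I → B) {l : ℕ} (s : ℕ) (c d : Fin l → I) : B :=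
  (List.ofFn fun i : Fin l => t (s + i) (c i) (d i)).prod

/-- The quantum minor with rows `c` and columns `d`, at the argument shifted by `s`. -/
def quantumMinor (t : ℕ → I → I → B) {l : ℕ} (s : ℕ) (c d : Fin l → I) : B :=
  alternatingSum (fun c => entryProd t s c d) c

/-- The product of the entry of `t` at the first indices and of `Q` at the remaining ones. -/
def consProd {l : ℕ} (t : I → I → B) (Q : (Fin l → I) → (Fin l → I) → B)
    (c d : Fin (l + 1) → I) : B :=
  t (c 0) (d 0) * Q (Fin.tail c) (Fin.tail d)

theorem entryProd_succ (t : ℕ → I → I → B) {l : ℕ} (s : ℕ) (c d : Fin (l + 1) → I) :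
    entryProd t s c d = consProd (t s) (entryProd t (s + 1)) c d := by
  simp [entryProd, consProd, Fin.tail, List.ofFn_succ, add_assoc, add_comm 1]

theorem map_quantumMinor {A : Type*} [Ring A] (φ : A →+* B) (t : ℕ → I → I → A) {l : ℕ} (s : ℕ)
    (c d : Fin l → I) :
    φ (quantumMinor t s c d) = quantumMinor (fun s a b => φ (t s a b)) s c d := by
  simp [quantumMinor, alternatingSum, entryProd, Units.smul_def, map_list_prod, List.map_ofFn,
    comp_def]

theorem tail_comp_swap_succ {l : ℕ} (c : Fin (l + 1) → I) (i j : Fin l) :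
    Fin.tail (c ∘ swap i.succ j.succ) = Fin.tail c ∘ swap i j :=
  funext fun x => congrArg c ((Fin.succ_injective l).swap_apply i j x)

theorem entryProd_add_entryProd_comp_swap {t : ℕ → I → I → B}
    (ht : ∀ s a a' b b', t s a b * t (s + 1) a' b' + t s a b' * t (s + 1) a' b =
      t s a' b * t (s + 1) a b' + t s a' b' * t (s + 1) a b)
    {l : ℕ} (i : Fin l) (s : ℕ) (c d : Fin (l + 1) → I) :
    entryProd t s (c ∘ swap i.castSucc i.succ) d +
        entryProd t s (c ∘ swap i.castSucc i.succ) (d ∘ swap i.castSucc i.succ) =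
      entryProd t s c d + entryProd t s c (d ∘ swap i.castSucc i.succ) := by
  induction l generalizing s with
  | zero => exact i.elim0
  | succ l ih =>
    cases i using Fin.cases with
    | zero =>
      have htail (c : Fin (l + 2) → I) :
          Fin.tail (Fin.tail (c ∘ swap 0 1)) = Fin.tail (Fin.tail c) :=
        funext fun x => congrArg c (swap_apply_of_ne_of_ne (Fin.succ_ne_zero _)
          ((Fin.succ_injective _).ne (Fin.succ_ne_zero x)))
      have hhead (c : Fin (l + 2) → I) : Fin.tail c 0 = c 1 := rfl
      simp only [Fin.castSucc_zero, Fin.succ_zero_eq_one, entryProd_succ, consProd, htail, hhead,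
        comp_apply, swap_apply_left, swap_apply_right, ← mul_assoc, ← add_mul]
      rw [ht]
    | succ i =>
      have hhead (c : Fin (l + 2) → I) : (c ∘ swap i.castSucc.succ i.succ.succ) 0 = c 0 :=
        congrArg c (swap_apply_of_ne_of_ne (Fin.succ_ne_zero _).symm (Fin.succ_ne_zero _).symm)
      simp only [← Fin.succ_castSucc, entryProd_succ t s, consProd, tail_comp_swap_succ, hhead,
        ← mul_add, ih]

theorem quantumMinor_comp_perm_right {t : ℕ → I → I → B}
    (ht : ∀ s a a' b b', t s a b * t (s + 1) a' b' + t s a b' * t (s + 1) a' b =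
      t s a' b * t (s + 1) a b' + t s a' b' * t (s + 1) a b)
    {l : ℕ} (s : ℕ) (c d : Fin l → I) (τ : Perm (Fin l)) :
    quantumMinor t s c (d ∘ τ) = Perm.sign τ • quantumMinor t s c d := by
  cases l with
  | zero => simp [Subsingleton.elim τ 1]
  | succ l =>
    have hτ : τ ∈ Submonoid.closure (Set.range fun i : Fin l => swap i.castSucc i.succ) := by
      rw [Perm.mclosure_swap_castSucc_succ]
      exact Submonoid.mem_top τ
    induction hτ using Submonoid.closure_induction generalizing d with
    | mem _ hx =>
      obtain ⟨i, rfl⟩ := hx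
      have hi : i.castSucc ≠ i.succ := Fin.castSucc_lt_succ.ne
      have hsum := alternatingSum_eq_zero_of_swap
        (f := fun c => entryProd t s c d + entryProd t s c (d ∘ swap i.castSucc i.succ)) hi
        (fun c => entryProd_add_entryProd_comp_swap ht i s c d) c
      rw [alternatingSum_add] at hsum
      rw [Perm.sign_swap hi, Units.neg_smul, one_smul]
      exact (neg_eq_of_add_eq_zero_right hsum).symm
    | one => simp
    | mul σ τ _ _ hσ hτ =>
      rw [Perm.coe_mul, ← comp_assoc, hτ, hσ, Perm.sign_mul, mul_comm, mul_smul]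

theorem alternatingSum_mul_left {l : ℕ} (x : B) (f : (Fin l → I) → B) (c : Fin l → I) :
    alternatingSum (fun c => x * f c) c = x * alternatingSum f c := by
  simp only [alternatingSum, mul_sum, mul_smul_comm]

theorem alternatingSum_mul_right {l : ℕ} (f : (Fin l → I) → B) (x : B) (c : Fin l → I) :
    alternatingSum (fun c => f c * x) c = alternatingSum f c * x := by
  simp only [alternatingSum, sum_mul, smul_mul_assoc]

theorem alternatingSum_consProd_quantumMinor (t : ℕ → I → I → B) {l : ℕ} (s : ℕ)
    (c d : Fin (l + 1) → I) :
    alternatingSum (fun c => consProd (t s) (quantumMinor t (s + 1)) c d) c =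
      l.factorial • quantumMinor t s c d := by
  have hterm (τ : Perm (Fin l)) (c : Fin (l + 1) → I) :
      t s (c 0) (d 0) * entryProd t (s + 1) (Fin.tail c ∘ τ) (Fin.tail d) =
        entryProd t s (c ∘ Perm.decomposeFin.symm (0, τ)) d := by
    have hhead : (c ∘ Perm.decomposeFin.symm (0, τ)) 0 = c 0 := by simp
    have htail : Fin.tail (c ∘ Perm.decomposeFin.symm (0, τ)) = Fin.tail c ∘ τ := by
      ext x; simp [Fin.tail]
    rw [entryProd_succ, consProd, hhead, htail]
  have hsign (τ : Perm (Fin l)) :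
      Perm.sign (Perm.decomposeFin.symm (0, τ)) = Perm.sign τ := by simp
  calc alternatingSum (fun c => consProd (t s) (quantumMinor t (s + 1)) c d) c
      = alternatingSum (fun c => ∑ τ : Perm (Fin l), Perm.sign τ •
          entryProd t s (c ∘ Perm.decomposeFin.symm (0, τ)) d) c := by
        simp only [consProd, quantumMinor, alternatingSum, mul_sum, mul_smul_comm, hterm]
    _ = ∑ τ : Perm (Fin l), Perm.sign τ • Perm.sign τ • quantumMinor t s c d := by
        simp only [alternatingSum_sum, alternatingSum_smul,
          alternatingSum_comp_perm (fun c => entryProd t s c d), hsign, quantumMinor]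
    _ = l.factorial • quantumMinor t s c d := by
        simp [smul_smul, Int.units_mul_self, Fintype.card_perm]

variable {Z : Type*} [CommRing Z] [Algebra Z B]

theorem exchangeOp_compl_exchangeOp_consProd {l : ℕ} {K K' e : Z} {g t : I → I → B}
    {Q : (Fin l → I) → (Fin l → I) → B}
    (ht : ∀ a b c d, K • (g a b * t c d) - e • (g c b * t a d) =
      K • (t c d * g a b) - e • (t c b * g a d))
    (hQ : ∀ a b c d, exchangeOp univ K' e (fun a c => g a b * Q c d) a c =
      exchangeOp univ K' e (fun b d => Q c d * g a b) b d)
    (a b : I) (c d : Fin (l + 1) → I) :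
    exchangeOp {0}ᶜ K' e (exchangeOp {0} K e fun a c => g a b * consProd t Q c d) a c =
      exchangeOp {0} K e (exchangeOp {0}ᶜ K' e fun b d => consProd t Q c d * g a b) b d := by
  let F (a : I) (c : Fin (l + 1) → I) (b : I) (d : Fin (l + 1) → I) : B :=
    t (c 0) (d 0) * g a b * Q (Fin.tail c) (Fin.tail d)
  have hhead (a b : I) (c d : Fin (l + 1) → I) :
      exchangeOp {0} K e (fun a c => g a b * consProd t Q c d) a c =
        exchangeOp {0} K e (F a c) b d := by
    have h := congrArg (· * Q (Fin.tail c) (Fin.tail d)) (ht a b (c 0) (d 0))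
    simpa [exchangeOp, consProd, F, sub_mul, mul_assoc] using h
  have htail (a b : I) (c d : Fin (l + 1) → I) :
      exchangeOp {0}ᶜ K' e (fun a c => F a c b d) a c =
        exchangeOp {0}ᶜ K' e (fun b d => consProd t Q c d * g a b) b d := by
    have h := congrArg (t (c 0) (d 0) * ·) (hQ a b (Fin.tail c) (Fin.tail d))
    have hne (i : Fin l) : (0 : Fin (l + 1)) ≠ i.succ := (Fin.succ_ne_zero i).symm
    simp only [exchangeOp, ← Fin.image_succ_univ, sum_image (Fin.succ_injective l).injOn]
    simpa [exchangeOp, consProd, F, mul_sub, mul_sum, mul_assoc, update_of_ne, hne,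
      Fin.tail_update_succ (α := fun _ => I), Fin.tail] using h
  simp only [funext fun a => funext fun c => hhead a b c d, exchangeOp_comm, htail]

theorem quantumMinor_exchange [IsAddTorsionFree B] {t : ℕ → I → I → B} {g : I → I → B} {D e : Z}
    (hreg : ∀ s : ℕ, IsSMulRegular B (D + s * e))
    (hg : ∀ (s : ℕ) a b c d, (D + s * e) • (g a b * t s c d) - e • (g c b * t s a d) =
      (D + s * e) • (t s c d * g a b) - e • (t s c b * g a d))
    (ht : ∀ s a a' b b', t s a b * t (s + 1) a' b' + t s a b' * t (s + 1) a' b =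
      t s a' b * t (s + 1) a b' + t s a' b' * t (s + 1) a b)
    {l : ℕ} (s : ℕ) (a b : I) (c d : Fin l → I) :
    exchangeOp univ (D + s * e) e (fun a c => g a b * quantumMinor t s c d) a c =
      exchangeOp univ (D + s * e) e (fun b d => quantumMinor t s c d * g a b) b d := by
  induction l generalizing s a b with
  | zero => simp [exchangeOp, quantumMinor, alternatingSum, entryProd]
  | succ l ih =>
    let Q (c d : Fin (l + 1) → I) := consProd (t s) (quantumMinor t (s + 1)) c d
    have hK : D + (s + 1 : ℕ) * e = D + s * e + e := by push_cast; ring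
    have hword : exchangeOp {0}ᶜ (D + s * e + e) e
          (exchangeOp {0} (D + s * e) e fun a c => g a b * Q c d) a =
        fun c => exchangeOp {0} (D + s * e) e
          (exchangeOp {0}ᶜ (D + s * e + e) e fun b d => Q c d * g a b) b d :=
      funext fun c => exchangeOp_compl_exchangeOp_consProd (hg s) (hK ▸ ih (s + 1)) a b c d
    have hleft : (fun a => alternatingSum fun c => g a b * Q c d) =
        fun a c => l.factorial • (g a b * quantumMinor t s c d) := by
      funext a c
      rw [← mul_smul_comm, ← alternatingSum_consProd_quantumMinor, alternatingSum_mul_left]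
    have hright (b : I) (d : Fin (l + 1) → I) : alternatingSum (fun c => Q c d * g a b) c =
        l.factorial • (quantumMinor t s c d * g a b) := by
      rw [← smul_mul_assoc, ← alternatingSum_consProd_quantumMinor, alternatingSum_mul_right]
    have hanti (i : Fin (l + 1)) (hi : i ≠ 0) (b : I) (d : Fin (l + 1) → I) :
        alternatingSum (fun c => Q c (d ∘ swap 0 i) * g a b) c =
          -alternatingSum (fun c => Q c d * g a b) c := by
      rw [hright, hright, quantumMinor_comp_perm_right ht, Perm.sign_swap hi.symm,
        Units.neg_smul, one_smul, neg_mul, smul_neg]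
    have hfused := alternatingSum_exchangeOp_compl_exchangeOp 0 (D + s * e) e
      (fun a c => g a b * Q c d) a c
    rw [hword, alternatingSum_exchangeOp_exchangeOp_compl _ _ hanti, hleft] at hfused
    simp only [hright, exchangeOp_nsmul] at hfused
    exact nsmul_right_injective l.factorial_ne_zero ((hK ▸ hreg (s + 1)) hfused.symm)

end QuantumMinor

section Shift

variable {V : Type*} [AddCommGroup V] [Module ℂ V]

theorem shiftSer_zero (c : ℂ) (f : ℕ → Module.End ℂ V) : shiftSer c f 0 = f 0 := by
  simp [shiftSer]

theorem shiftSer_zero_left (f : ℕ → Module.End ℂ V) : shiftSer 0 f = f := by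
  funext m
  rw [shiftSer, sum_eq_single_of_mem m (self_mem_range_succ m)]
  · simp
  · intro r hr hrm
    simp [Nat.sub_ne_zero_of_lt (lt_of_le_of_ne (mem_range_succ_iff.mp hr) hrm)]

theorem shiftSer_sub (c : ℂ) (f g : ℕ → Module.End ℂ V) (m : ℕ) :
    shiftSer c (fun r => f r - g r) m = shiftSer c f m - shiftSer c g m := by
  simp [shiftSer, smul_sub]

theorem shiftSer_add (c : ℂ) (f g : ℕ → Module.End ℂ V) (m : ℕ) :
    shiftSer c (fun r => f r + g r) m = shiftSer c f m + shiftSer c g m := by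
  simp [shiftSer, sum_add_distrib]

theorem shiftSer_map (c : ℂ) (φ : Module.End ℂ V →ₗ[ℂ] Module.End ℂ V) (f : ℕ → Module.End ℂ V)
    (m : ℕ) : shiftSer c (fun r => φ (f r)) m = φ (shiftSer c f m) := by
  simp [shiftSer]

theorem shiftSer_mul_left (c : ℂ) (x : Module.End ℂ V) (f : ℕ → Module.End ℂ V) (m : ℕ) :
    shiftSer c (fun r => x * f r) m = x * shiftSer c f m :=
  shiftSer_map c (LinearMap.mulLeft ℂ x) f m

theorem shiftSer_mul_right (c : ℂ) (f : ℕ → Module.End ℂ V) (x : Module.End ℂ V) (m : ℕ) :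
    shiftSer c (fun r => f r * x) m = shiftSer c f m * x :=
  shiftSer_map c (LinearMap.mulRight ℂ x) f m

theorem shiftSer_smul (c z : ℂ) (f : ℕ → Module.End ℂ V) (m : ℕ) :
    shiftSer c (fun r => z • f r) m = z • shiftSer c f m :=
  shiftSer_map c (LinearMap.lsmul ℂ _ z) f m

theorem shiftSer_succ_eq_sum {f : ℕ → Module.End ℂ V} (hf : f 0 = 0) (c : ℂ) (m : ℕ) :
    shiftSer c f (m + 1) =
      ∑ r ∈ range (m + 1), ((m.choose (m - r) : ℂ) * c ^ (m - r)) • f (r + 1) := by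
  rw [shiftSer, sum_range_succ', hf, smul_zero, add_zero]
  simp only [Nat.add_sub_cancel, Nat.add_sub_add_right]

/-- Coefficientwise, `u f(u - c) = c f(u - c) + w f(w)` at `w = u - c`. -/
theorem shiftSer_succ {f : ℕ → Module.End ℂ V} (hf : f 0 = 0) (c : ℂ) (m : ℕ) :
    shiftSer c f (m + 1) = c • shiftSer c f m + shiftSer c (fun r => f (r + 1)) m := by
  cases m with
  | zero => simp [shiftSer, sum_range_succ, hf]
  | succ m =>
    have hpascal : ∀ r ∈ range (m + 1),
        (((m + 1).choose (m + 1 - r) : ℂ) * c ^ (m + 1 - r)) • f (r + 1) =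
          c • ((m.choose (m - r) : ℂ) * c ^ (m - r)) • f (r + 1) +
            ((m.choose (m + 1 - r) : ℂ) * c ^ (m + 1 - r)) • f (r + 1) := by
      intro r hr
      rw [Nat.sub_add_comm (mem_range_succ_iff.mp hr), Nat.choose_succ_succ']
      push_cast
      module
    rw [shiftSer_succ_eq_sum hf, shiftSer_succ_eq_sum hf, shiftSer, sum_range_succ,
      sum_range_succ _ (m + 1), sum_congr rfl hpascal, sum_add_distrib, smul_sum, add_assoc]
    simp

/-- Coefficients of `F(u - r, v - s)` for a double series `F(u, v) = ∑ F_{pq} u^{-p} v^{-q}`. -/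
noncomputable def shiftSer₂ (r s : ℂ) (F : ℕ → ℕ → Module.End ℂ V) (p q : ℕ) : Module.End ℂ V :=
  shiftSer r (fun p => shiftSer s (F p) q) p

theorem shiftSer₂_sub (r s : ℂ) (F G : ℕ → ℕ → Module.End ℂ V) (p q : ℕ) :
    shiftSer₂ r s (fun p q => F p q - G p q) p q = shiftSer₂ r s F p q - shiftSer₂ r s G p q := by
  simp only [shiftSer₂, shiftSer_sub]

theorem shiftSer₂_mul (r s : ℂ) (f g : ℕ → Module.End ℂ V) (p q : ℕ) :
    shiftSer₂ r s (fun p q => f p * g q) p q = shiftSer r f p * shiftSer s g q := by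
  simp only [shiftSer₂, shiftSer_mul_left, shiftSer_mul_right]

theorem shiftSer₂_mul_swap (r s : ℂ) (f g : ℕ → Module.End ℂ V) (p q : ℕ) :
    shiftSer₂ r s (fun p q => g q * f p) p q = shiftSer s g q * shiftSer r f p := by
  simp only [shiftSer₂, shiftSer_mul_left, shiftSer_mul_right]

theorem shiftSer₂_succ_left {F : ℕ → ℕ → Module.End ℂ V} (hF : ∀ q, F 0 q = 0) (r s : ℂ)
    (p q : ℕ) : shiftSer₂ r s F (p + 1) q =
      r • shiftSer₂ r s F p q + shiftSer₂ r s (fun p q => F (p + 1) q) p q :=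
  shiftSer_succ (by simp [shiftSer, hF]) r p

theorem shiftSer₂_succ_right {F : ℕ → ℕ → Module.End ℂ V} (hF : ∀ p, F p 0 = 0) (r s : ℂ)
    (p q : ℕ) : shiftSer₂ r s F p (q + 1) =
      s • shiftSer₂ r s F p q + shiftSer₂ r s (fun p q => F p (q + 1)) p q := by
  simp only [shiftSer₂, shiftSer_succ (hF _), shiftSer_add, shiftSer_smul]

end Shift

namespace IsYangianRep

variable {n : ℕ} {V : Type*} [AddCommGroup V] [Module ℂ V]
  {T : ℕ → Fin n → Fin n → Module.End ℂ V}

theorem commute_zero (hT : IsYangianRep n T) (i j : Fin n) (x : Module.End ℂ V) :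
    Commute (T 0 i j) x := by
  rw [hT.1]
  split_ifs
  exacts [Commute.one_left x, Commute.zero_left x]

theorem shift_relation (hT : IsYangianRep n T) (r s : ℂ) (i j k l : Fin n) (p q : ℕ) :
    let S (c : ℂ) (i j : Fin n) : ℕ → Module.End ℂ V := shiftSer c fun m => T m i j
    (S r i j (p + 1) * S s k l q - S s k l q * S r i j (p + 1)) -
        (S r i j p * S s k l (q + 1) - S s k l (q + 1) * S r i j p) +
        (s - r) • (S r i j p * S s k l q - S s k l q * S r i j p) =
      S r k j p * S s i l q - S s k j q * S r i l p := by
  let F (p q : ℕ) : Module.End ℂ V := T p i j * T q k l - T q k l * T p i j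
  have hF₀ (q : ℕ) : F 0 q = 0 := sub_eq_zero.mpr (hT.commute_zero i j _)
  have hF₀' (p : ℕ) : F p 0 = 0 := sub_eq_zero.mpr (hT.commute_zero k l _).symm
  have hrel : shiftSer₂ r s (fun p q => F (p + 1) q) p q -
      shiftSer₂ r s (fun p q => F p (q + 1)) p q =
        shiftSer₂ r s (fun p q => T p k j * T q i l - T q k j * T p i l) p q := by
    rw [← shiftSer₂_sub]
    exact congrArg (shiftSer₂ r s · p q) (funext₂ fun p q => hT.2 p q i j k l)
  have hshift (p q : ℕ) := shiftSer₂_sub r s (fun p q => T p i j * T q k l)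
    (fun p q => T q k l * T p i j) p q
  simp only [shiftSer₂_sub _ _ (fun p q => T p k j * T q i l), shiftSer₂_mul,
    shiftSer₂_mul_swap] at hrel hshift
  intro S
  rw [← hshift, ← hshift, ← hshift, ← hrel]
  change shiftSer₂ r s F _ _ - shiftSer₂ r s F _ _ + (s - r) • shiftSer₂ r s F _ _ = _
  rw [shiftSer₂_succ_left hF₀, shiftSer₂_succ_right hF₀']
  module

end IsYangianRep

section DoubleSeries

variable (R : Type*) [Ring R]

/-- The variable `u⁻¹`, as a central scalar, when `R⟦X⟧⟦X⟧` is read as `R[[v⁻¹]][[u⁻¹]]`. -/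
noncomputable def uInv : Subring.center R⟦X⟧⟦X⟧ :=
  ⟨X, Subring.mem_center_iff.mpr fun F => commute_X F⟩

/-- The variable `v⁻¹`, as a central scalar, when `R⟦X⟧⟦X⟧` is read as `R[[v⁻¹]][[u⁻¹]]`. -/
noncomputable def vInv : Subring.center R⟦X⟧⟦X⟧ :=
  ⟨C X, Subring.mem_center_iff.mpr fun F => by ext; simp [coeff_C_mul, coeff_mul_C, X_mul]⟩

variable {R}

theorem coeff_zero_uInv_smul (F : R⟦X⟧⟦X⟧) : coeff 0 (uInv R • F) = 0 :=
  coeff_zero_X_mul F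

theorem coeff_succ_uInv_smul (p : ℕ) (F : R⟦X⟧⟦X⟧) : coeff (p + 1) (uInv R • F) = coeff p F :=
  coeff_succ_X_mul p F

theorem coeff_vInv_smul (p : ℕ) (F : R⟦X⟧⟦X⟧) : coeff p (vInv R • F) = X * coeff p F :=
  coeff_C_mul p F X

theorem coeff_vInv_sub_uInv_add_smul (s p q : ℕ) (F : R⟦X⟧⟦X⟧) :
    coeff q (coeff p ((vInv R - uInv R + s * (uInv R * vInv R)) • F)) =
      coeff q (X * coeff p F) - coeff q (coeff p (uInv R • F)) +
        s • coeff q (coeff p (uInv R • vInv R • F)) := by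
  rw [add_smul, sub_smul, mul_smul, mul_smul, Nat.cast_smul_eq_nsmul, ← coeff_vInv_smul]
  simp only [map_add, map_sub, map_nsmul]

/-- Multiplying by `u⁻¹v⁻¹` turns `u - v + s` into `v⁻¹ - u⁻¹ + s u⁻¹v⁻¹`, which acts on series
without positive powers of `u` and `v`. -/
theorem vInv_sub_uInv_add_smul_eq_iff (s : ℕ) (F G : R⟦X⟧⟦X⟧) :
    (vInv R - uInv R + s * (uInv R * vInv R)) • F = (uInv R * vInv R) • G ↔
      (∀ q, coeff q (coeff 0 F) = 0) ∧ (∀ p, coeff 0 (coeff p F) = 0) ∧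
        ∀ p q, coeff q (coeff (p + 1) F) - coeff (q + 1) (coeff p F) + s • coeff q (coeff p F) =
          coeff q (coeff p G) := by
  have hext : (vInv R - uInv R + s * (uInv R * vInv R)) • F = (uInv R * vInv R) • G ↔
      ∀ p q, coeff q (X * coeff p F) - coeff q (coeff p (uInv R • F)) +
        s • coeff q (coeff p (uInv R • vInv R • F)) = coeff q (coeff p (uInv R • vInv R • G)) := by
    simp only [PowerSeries.ext_iff, coeff_vInv_sub_uInv_add_smul, mul_smul]
  rw [hext]
  constructor
  · intro h
    refine ⟨fun q => ?_, fun p => ?_, fun p q => ?_⟩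
    · simpa only [coeff_zero_uInv_smul, coeff_succ_X_mul, map_zero, smul_zero, sub_zero, add_zero]
        using h 0 (q + 1)
    · simpa only [coeff_succ_uInv_smul, coeff_vInv_smul, coeff_zero_X_mul, smul_zero, zero_sub,
        add_zero, neg_eq_zero] using h (p + 1) 0
    · simpa only [coeff_succ_uInv_smul, coeff_vInv_smul, coeff_succ_X_mul]
        using h (p + 1) (q + 1)
  · rintro ⟨h₀, h₀', hrel⟩ (- | p) (- | q) <;>
      simp only [coeff_zero_uInv_smul, coeff_succ_uInv_smul, coeff_vInv_smul, coeff_zero_X_mul,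
        coeff_succ_X_mul, h₀, h₀', ← hrel, map_zero, smul_zero, sub_zero, add_zero]

theorem isSMulRegular_vInv_sub_uInv_add (s : ℕ) :
    IsSMulRegular R⟦X⟧⟦X⟧ (vInv R - uInv R + s * (uInv R * vInv R)) := by
  refine isSMulRegular_iff_right_eq_zero_of_smul.mpr fun F hF => ?_
  obtain ⟨h₀, -, hrel⟩ := (vInv_sub_uInv_add_smul_eq_iff s F 0).mp (hF.trans (smul_zero _).symm)
  ext p q
  induction p generalizing q with
  | zero => simpa using h₀ q
  | succ p ih => simpa [ih] using hrel p q

/-- Specialises `(u - v + 1) [f(u), g(v)] = f₁(u) g₁(v) - g₂(v) f₂(u)` to `u = v`. -/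
theorem mul_sub_mul_eq_of_coeff {f g f₁ g₁ f₂ g₂ : R⟦X⟧}
    (hf : ∀ x, Commute (coeff 0 f) x) (hg : ∀ x, Commute (coeff 0 g) x)
    (h : ∀ p q, (coeff (p + 1) f * coeff q g - coeff q g * coeff (p + 1) f) -
        (coeff p f * coeff (q + 1) g - coeff (q + 1) g * coeff p f) +
        (coeff p f * coeff q g - coeff q g * coeff p f) =
      coeff p f₁ * coeff q g₁ - coeff q g₂ * coeff p f₂) :
    f * g - g * f = f₁ * g₁ - g₂ * f₂ := by
  let F (x : ℕ × ℕ) : R := coeff x.1 f * coeff x.2 g - coeff x.2 g * coeff x.1 f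
  have hcoeff (m : ℕ) (f g f' g' : R⟦X⟧) : coeff m (f * g - g' * f') =
      ∑ x ∈ antidiagonal m, (coeff x.1 f * coeff x.2 g - coeff x.2 g' * coeff x.1 f') := by
    rw [map_sub, coeff_mul, coeff_mul, sum_sub_distrib,
      ← Nat.sum_antidiagonal_swap (f := fun x => coeff x.1 g' * coeff x.2 f')]
    rfl
  ext m
  have hleft := Nat.sum_antidiagonal_succ (n := m) (f := F)
  have hright := Nat.sum_antidiagonal_succ' (n := m) (f := F)
  have hF₀ : F (0, m + 1) = 0 := sub_eq_zero.mpr (hf _)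
  have hF₀' : F (m + 1, 0) = 0 := sub_eq_zero.mpr (hg _).symm
  rw [hF₀, zero_add] at hleft
  rw [hF₀', zero_add] at hright
  rw [hcoeff, hcoeff]
  simp only [← h, sum_add_distrib, sum_sub_distrib]
  simp only [F, sum_sub_distrib] at hleft hright
  rw [← hleft, ← hright, sub_self, zero_add]

end DoubleSeries

section Yangian

variable {n : ℕ} {V : Type*} [AddCommGroup V] [Module ℂ V]

/-- The series `t_{ij}(v - s)` in `v⁻¹`. -/
noncomputable def shiftedEntry (T : ℕ → Fin n → Fin n → Module.End ℂ V) (s : ℕ) (i j : Fin n) :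
    (Module.End ℂ V)⟦X⟧ :=
  mk (shiftSer s fun m => T m i j)

/-- The series `t_{ij}(u)`, constant in `v⁻¹`; as for `uInv`, the outer variable is `u⁻¹`. -/
noncomputable def uEntry (T : ℕ → Fin n → Fin n → Module.End ℂ V) (i j : Fin n) :
    (Module.End ℂ V)⟦X⟧⟦X⟧ :=
  mk fun m => C (T m i j)

theorem mk_prodSer (L : List (ℕ → Module.End ℂ V)) : mk (prodSer L) = (L.map mk).prod := by
  induction L with
  | nil =>
    ext1 m
    simp only [prodSer, List.map_nil, List.prod_nil, coeff_mk, coeff_one]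
    rfl
  | cons f L ih =>
    rw [List.map_cons, List.prod_cons, ← ih]
    ext1 m
    rw [coeff_mul, Nat.sum_antidiagonal_eq_sum_range_succ_mk]
    simp only [prodSer, coeff_mk, mulSer]
    rfl

theorem quantumMinor_shiftedEntry (T : ℕ → Fin n → Fin n → Module.End ℂ V) {l : ℕ}
    (c d : Fin l → Fin n) : quantumMinor (shiftedEntry T) 0 c d = mk (qminorSer T l c d) := by
  ext1 m
  have hword (σ : Perm (Fin l)) : entryProd (shiftedEntry T) 0 (c ∘ σ) d =
      mk (prodSer (List.ofFn fun s : Fin l => shiftSer s fun r => T r (c (σ s)) (d s))) := by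
    simp [mk_prodSer, entryProd, List.map_ofFn, comp_def, shiftedEntry]
  simp only [quantumMinor, alternatingSum, hword, map_sum, Units.smul_def, map_zsmul, coeff_mk,
    qminorSer, Int.cast_smul_eq_zsmul]

theorem quantumMinor_C_shiftedEntry (T : ℕ → Fin n → Fin n → Module.End ℂ V) {l : ℕ}
    (c d : Fin l → Fin n) :
    quantumMinor (fun s i j => C (shiftedEntry T s i j)) 0 c d = C (mk (qminorSer T l c d)) := by
  rw [← quantumMinor_shiftedEntry, map_quantumMinor]

namespace IsYangianRep

variable {T : ℕ → Fin n → Fin n → Module.End ℂ V}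

theorem shiftedEntry_mul_sub (hT : IsYangianRep n T) (s : ℕ) (i j k l : Fin n) :
    shiftedEntry T s i j * shiftedEntry T (s + 1) k l -
        shiftedEntry T (s + 1) k l * shiftedEntry T s i j =
      shiftedEntry T s k j * shiftedEntry T (s + 1) i l -
        shiftedEntry T (s + 1) k j * shiftedEntry T s i l := by
  have hzero (s : ℕ) (i j : Fin n) (x : Module.End ℂ V) :
      Commute (coeff 0 (shiftedEntry T s i j)) x := by
    simpa only [shiftedEntry, coeff_mk, shiftSer_zero] using hT.commute_zero i j x
  refine mul_sub_mul_eq_of_coeff (hzero _ _ _) (hzero _ _ _) fun p q => ?_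
  simpa [shiftedEntry] using hT.shift_relation s (s + 1 : ℕ) i j k l p q

theorem shiftedEntry_mul_add (hT : IsYangianRep n T) (s : ℕ) (a a' b b' : Fin n) :
    shiftedEntry T s a b * shiftedEntry T (s + 1) a' b' +
        shiftedEntry T s a b' * shiftedEntry T (s + 1) a' b =
      shiftedEntry T s a' b * shiftedEntry T (s + 1) a b' +
        shiftedEntry T s a' b' * shiftedEntry T (s + 1) a b := by
  linear_combination (norm := abel)
    hT.shiftedEntry_mul_sub s a b a' b' + hT.shiftedEntry_mul_sub s a b' a' b

theorem C_shiftedEntry_mul_add (hT : IsYangianRep n T) (s : ℕ) (a a' b b' : Fin n) :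
    (C (shiftedEntry T s a b) * C (shiftedEntry T (s + 1) a' b') +
        C (shiftedEntry T s a b') * C (shiftedEntry T (s + 1) a' b) : (Module.End ℂ V)⟦X⟧⟦X⟧) =
      C (shiftedEntry T s a' b) * C (shiftedEntry T (s + 1) a b') +
        C (shiftedEntry T s a' b') * C (shiftedEntry T (s + 1) a b) := by
  simp only [← map_mul, ← map_add, hT.shiftedEntry_mul_add]

theorem uEntry_mul_shiftedEntry (hT : IsYangianRep n T) (s : ℕ) (i j k l : Fin n) :
    let x := uInv (Module.End ℂ V)
    let y := vInv (Module.End ℂ V)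
    (y - x + s * (x * y)) • (uEntry T i j * C (shiftedEntry T s k l)) -
        (x * y) • (uEntry T k j * C (shiftedEntry T s i l)) =
      (y - x + s * (x * y)) • (C (shiftedEntry T s k l) * uEntry T i j) -
        (x * y) • (C (shiftedEntry T s k j) * uEntry T i l) := by
  intro x y
  rw [sub_eq_sub_iff_sub_eq_sub, ← smul_sub, ← smul_sub]
  refine (vInv_sub_uInv_add_smul_eq_iff s _ _).mpr ⟨fun q => ?_, fun p => ?_, fun p q => ?_⟩
  all_goals
    simp only [uEntry, shiftedEntry, map_sub, coeff_mul_C, coeff_C_mul, coeff_mk]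
  · exact sub_eq_zero.mpr (hT.commute_zero i j _)
  · rw [shiftSer_zero]
    exact sub_eq_zero.mpr (hT.commute_zero k l _).symm
  · simpa [shiftSer_zero_left, Nat.cast_smul_eq_nsmul ℂ] using hT.shift_relation 0 s i j k l p q

end IsYangianRep

end Yangian

/-- The identity
`(u−v)[t_{ab}(u), t^{c_1⋯c_l}_{d_1⋯d_l}(v)]
  = Σ_i t_{c_i b}(u) t^{c_1⋯a⋯c_l}_{d_1⋯d_l}(v)
    − Σ_i t^{c_1⋯c_l}_{d_1⋯b⋯d_l}(v) t_{a d_i}(u)`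
of `End(V)`-valued formal series in `u⁻¹` and `v⁻¹`:  the first two conjuncts
state that the coefficients of the left-hand side at the non-negative powers
`u^1 v^{-q}` and `u^{-p} v^1` vanish, and the third conjunct identifies the
coefficients at `u^{-p} v^{-q}` for all `p, q ≥ 0`. -/
theorem tser_qminor_commutator_identity
    (n : ℕ) {V : Type*} [AddCommGroup V] [Module ℂ V]
    (T : ℕ → Fin n → Fin n → (V →ₗ[ℂ] V)) (hT : IsYangianRep n T)
    (a b : Fin n) (l : ℕ) (c d : Fin l → Fin n) :
    (∀ q : ℕ, T 0 a b ∘ₗ qminorSer T l c d q - qminorSer T l c d q ∘ₗ T 0 a b = 0) ∧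
    (∀ p : ℕ, T p a b ∘ₗ qminorSer T l c d 0 - qminorSer T l c d 0 ∘ₗ T p a b = 0) ∧
    (∀ p q : ℕ,
      (T (p + 1) a b ∘ₗ qminorSer T l c d q - qminorSer T l c d q ∘ₗ T (p + 1) a b)
        - (T p a b ∘ₗ qminorSer T l c d (q + 1) - qminorSer T l c d (q + 1) ∘ₗ T p a b)
      = (∑ i : Fin l, T p (c i) b ∘ₗ qminorSer T l (Function.update c i a) d q)
        - ∑ i : Fin l, qminorSer T l c (Function.update d i b) q ∘ₗ T p a (d i)) := by
  have : IsAddTorsionFree (Module.End ℂ V)⟦X⟧⟦X⟧ := .of_isTorsionFree ℂ _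
  have hexchange := quantumMinor_exchange isSMulRegular_vInv_sub_uInv_add
    hT.uEntry_mul_shiftedEntry hT.C_shiftedEntry_mul_add 0 a b c d
  simp only [exchangeOp, quantumMinor_C_shiftedEntry] at hexchange
  rw [sub_eq_sub_iff_sub_eq_sub, ← smul_sub, ← smul_sub] at hexchange
  have hcoeff := (vInv_sub_uInv_add_smul_eq_iff 0 _ _).mp hexchange
  simp only [map_sub, map_sum, uEntry, coeff_mul_C, coeff_C_mul, coeff_mk, zero_smul,
    add_zero] at hcoeff
  exact hcoeff
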